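/- Let G be a connected undirected simple graph on n ≥ 2 vertices with m edges, degree matrix D, Laplacian L = D − A, and normalized Laplacian 𝓛 = D^{-1/2} L D^{-1/2}. Let L† be the Moore–Penrose pseudoinverse of L and 𝓛† the Moore–Penrose pseudoinverse of 𝓛. Then 𝓛† = (I − (1/(2m)) D^{1/2} 𝟏 𝟏ᵀ D^{1/2}) · D^{1/2} L† D^{1/2} · (I − (1/(2m)) D^{1/2} 𝟏 𝟏ᵀ D^{1/2}), where 𝟏 is the all-ones vector. -/

import Mathlib

open Matrix

/-!
Inserting `a = a y a` into `x = x a x` gives `x = (x a) y (a x)`: the Moore–Penrose inverse `x` of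
`a` is determined by any `y` with `a y a = a` and the two projections `x a` and `a x`. For
`a = 𝓛` one may take `y = D^{1/2} L† D^{1/2}`, and since `𝓛` is symmetric both projections are the
orthogonal projection along the kernel of `𝓛`. As `G` is connected, `ker L` is spanned by `𝟏`, so
`ker 𝓛` is spanned by `D^{1/2} 𝟏`, whose squared norm is the degree sum `2m`.
-/

/-- `x` is the Moore–Penrose inverse of `a`. It is stated in any type with a multiplication and
a star, so that it covers square matrices with the conjugate transpose. -/
structure IsMoorePenroseInverse {R : Type*} [Mul R] [Star R] (a x : R) : Prop where
  mul_mul_self : a * x * a = a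
  mul_mul_inverse : x * a * x = x
  isSelfAdjoint_mul : IsSelfAdjoint (a * x)
  isSelfAdjoint_inverse_mul : IsSelfAdjoint (x * a)

namespace IsMoorePenroseInverse

theorem eq_mul_mul_of_mul_mul_eq {R : Type*} [Semigroup R] [Star R] {a x y : R}
    (h : IsMoorePenroseInverse a x) (hy : a * y * a = a) : x = x * a * y * (a * x) :=
  calc x = x * (a * y * a) * x := by rw [hy, h.mul_mul_inverse]
    _ = x * a * y * (a * x) := by simp only [mul_assoc]

protected theorem star {R : Type*} [Semigroup R] [StarMul R] {a x : R}
    (h : IsMoorePenroseInverse a x) : IsMoorePenroseInverse (star a) (star x) where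
  mul_mul_self := by rw [← star_mul, ← star_mul, ← mul_assoc, h.mul_mul_self]
  mul_mul_inverse := by rw [← star_mul, ← star_mul, ← mul_assoc, h.mul_mul_inverse]
  isSelfAdjoint_mul := by
    rw [← star_mul]
    exact IsSelfAdjoint.star_iff.2 h.isSelfAdjoint_inverse_mul
  isSelfAdjoint_inverse_mul := by
    rw [← star_mul]
    exact IsSelfAdjoint.star_iff.2 h.isSelfAdjoint_mul

section StarProjection

variable {R : Type*} [Ring R] [StarRing R] {a x p : R}

theorem inverse_mul_eq_of_isStarProjection (h : IsMoorePenroseInverse a x)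
    (hp : IsStarProjection p) (hap : ∀ b, a * b = 0 ↔ p * b = 0) : x * a = p := by
  have a_mul_p : a * p = a := by
    have : a * (1 - p) = 0 := (hap _).2 hp.isIdempotentElem.mul_one_sub_self
    rwa [mul_sub, mul_one, sub_eq_zero, eq_comm] at this
  have p_mul_inverse_mul : p * (x * a) = p := by
    have : p * (1 - x * a) = 0 :=
      (hap _).1 (by rw [mul_sub, mul_one, ← mul_assoc, h.mul_mul_self, sub_self])
    rwa [mul_sub, mul_one, sub_eq_zero, eq_comm] at this
  calc x * a = x * a * p := by rw [mul_assoc, a_mul_p]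
    _ = star (p * (x * a)) := by
      rw [star_mul, h.isSelfAdjoint_inverse_mul.star_eq, hp.isSelfAdjoint.star_eq]
    _ = p := by rw [p_mul_inverse_mul, hp.isSelfAdjoint.star_eq]

theorem mul_inverse_eq_of_isStarProjection (h : IsMoorePenroseInverse a x)
    (ha : IsSelfAdjoint a) (hp : IsStarProjection p) (hap : ∀ b, a * b = 0 ↔ p * b = 0) :
    a * x = p := by
  have h_star : IsMoorePenroseInverse a (star x) := by simpa only [ha.star_eq] using h.star
  calc a * x = star (star x * a) := by rw [star_mul, star_star, ha.star_eq]
    _ = p := by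
      rw [h_star.inverse_mul_eq_of_isStarProjection hp hap, hp.isSelfAdjoint.star_eq]

end StarProjection

end IsMoorePenroseInverse

theorem mul_mul_mul_eq_of_mul_eq_one {R : Type*} [Monoid R] {a y s s' t t' : R}
    (hy : a * y * a = a) (hts : t * s = 1) (hst' : s' * t' = 1) :
    t' * a * t * (s * y * s') * (t' * a * t) = t' * a * t :=
  calc t' * a * t * (s * y * s') * (t' * a * t)
      = t' * (a * (t * s) * y * (s' * t') * a) * t := by simp only [mul_assoc]
    _ = t' * a * t := by rw [hts, hst', mul_one, mul_one, hy]

theorem mul_eq_zero_iff_forall_col_mem_ker {l m n R : Type*} [Fintype m] [CommSemiring R]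
    {A : Matrix l m R} {B : Matrix m n R} : A * B = 0 ↔ ∀ j, B.col j ∈ A.mulVecLin.ker :=
  ⟨fun h j => funext fun i => congrFun (congrFun h i) j,
    fun h => Matrix.ext fun i j => congrFun (h j) i⟩

theorem ker_mulVecLin_mul_mul {m R : Type*} [Fintype m] [DecidableEq m] [CommRing R]
    {A S T T' : Matrix m m R} {u : m → R} (hA : A.mulVecLin.ker = R ∙ u) (hTS : T * S = 1)
    (hT' : IsUnit T') : (T' * A * T).mulVecLin.ker = R ∙ (S *ᵥ u) := by
  have hST : S * T = 1 := mul_eq_one_comm.1 hTS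
  ext v
  calc (T' * A * T) *ᵥ v = 0 ↔ T' *ᵥ (A *ᵥ (T *ᵥ v)) = T' *ᵥ 0 := by
        rw [mulVec_mulVec, mulVec_mulVec, mulVec_zero]
    _ ↔ T *ᵥ v ∈ A.mulVecLin.ker := (mulVec_injective_of_isUnit hT').eq_iff
    _ ↔ ∃ c : R, c • u = T *ᵥ v := by rw [hA, Submodule.mem_span_singleton]
    _ ↔ ∃ c : R, c • (S *ᵥ u) = v := exists_congr fun c => by
      constructor
      · intro h
        rw [← mulVec_smul, h, mulVec_mulVec, hST, one_mulVec]
      · rintro rfl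
        rw [mulVec_smul, mulVec_mulVec, hTS, one_mulVec]
    _ ↔ v ∈ R ∙ (S *ᵥ u) := Submodule.mem_span_singleton.symm

section LineComplProj

variable {n 𝕜 : Type*} [Fintype n] [DecidableEq n] [Field 𝕜] [StarRing 𝕜]

/-- The orthogonal projection onto the orthogonal complement of the line spanned by `w`. It is the
identity matrix when `star w ⬝ᵥ w = 0`. -/
def lineComplProj (w : n → 𝕜) : Matrix n n 𝕜 :=
  1 - (star w ⬝ᵥ w)⁻¹ • vecMulVec w (star w)

theorem lineComplProj_mulVec (w v : n → 𝕜) :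
    lineComplProj w *ᵥ v = v - ((star w ⬝ᵥ w)⁻¹ * (star w ⬝ᵥ v)) • w := by
  rw [lineComplProj, sub_mulVec, one_mulVec, smul_mulVec, vecMulVec_mulVec, op_smul_eq_smul,
    smul_smul]

theorem isStarProjection_lineComplProj (w : n → 𝕜) : IsStarProjection (lineComplProj w) := by
  refine IsStarProjection.one_sub ⟨?_, ?_⟩
  · have inv_mul_inv_mul (c : 𝕜) : c⁻¹ * c⁻¹ * c = c⁻¹ := by
      simpa only [inv_inv] using mul_self_mul_inv c⁻¹
    rw [IsIdempotentElem, smul_mul_smul_comm, vecMulVec_mul_vecMulVec, vecMulVec_smul, smul_smul,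
      inv_mul_inv_mul]
  · have star_dotProduct : star (star w ⬝ᵥ w) = star w ⬝ᵥ w := by
      rw [← star_dotProduct_star, star_star]
    rw [IsSelfAdjoint, star_smul, star_inv₀, star_dotProduct, star_eq_conjTranspose,
      conjTranspose_vecMulVec, star_star]

theorem ker_mulVecLin_lineComplProj {w : n → 𝕜} (hw : star w ⬝ᵥ w ≠ 0) :
    (lineComplProj w).mulVecLin.ker = 𝕜 ∙ w := by
  ext v
  rw [LinearMap.mem_ker, mulVecLin_apply, lineComplProj_mulVec, sub_eq_zero,
    Submodule.mem_span_singleton]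
  refine ⟨fun hv => ⟨_, hv.symm⟩, ?_⟩
  rintro ⟨c, rfl⟩
  rw [dotProduct_smul, smul_eq_mul, mul_comm c, inv_mul_cancel_left₀ hw]

theorem IsMoorePenroseInverse.eq_lineComplProj_mul_mul {A S T X Y : Matrix n n 𝕜} {u : n → 𝕜}
    (hA : A.IsHermitian) (hker : A.mulVecLin.ker = 𝕜 ∙ u) (hTS : T * S = 1)
    (hu : star (S *ᵥ u) ⬝ᵥ (S *ᵥ u) ≠ 0) (hX : A * X * A = A)
    (hY : IsMoorePenroseInverse (Tᴴ * A * T) Y) :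
    Y = lineComplProj (S *ᵥ u) * (S * X * Sᴴ) * lineComplProj (S *ᵥ u) := by
  have hST' : Sᴴ * Tᴴ = 1 := by rw [← conjTranspose_mul, hTS, conjTranspose_one]
  have hproj := isStarProjection_lineComplProj (S *ᵥ u)
  have hann (B : Matrix n n 𝕜) : Tᴴ * A * T * B = 0 ↔ lineComplProj (S *ᵥ u) * B = 0 := by
    rw [mul_eq_zero_iff_forall_col_mem_ker, mul_eq_zero_iff_forall_col_mem_ker,
      ker_mulVecLin_mul_mul hker hTS (.of_mul_eq_one_right _ hST'),
      ker_mulVecLin_lineComplProj hu]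
  have hself : IsSelfAdjoint (Tᴴ * A * T) := isHermitian_conjTranspose_mul_mul T hA
  rw [hY.eq_mul_mul_of_mul_mul_eq (mul_mul_mul_eq_of_mul_eq_one hX hTS hST'),
    hY.inverse_mul_eq_of_isStarProjection hproj hann,
    hY.mul_inverse_eq_of_isStarProjection hself hproj hann]

end LineComplProj

section Graph

variable {V : Type*} [Fintype V] [DecidableEq V] (G : SimpleGraph V) [DecidableRel G.Adj]

/-- The matrix `D^{1/2}` of a graph with degree matrix `D`. -/
noncomputable def sqrtDegMatrix : Matrix V V ℝ :=
  diagonal fun i => √(G.degree i)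

/-- The matrix `D^{-1/2}` of a graph with degree matrix `D`. It has a zero diagonal entry at each
isolated vertex. -/
noncomputable def invSqrtDegMatrix : Matrix V V ℝ :=
  diagonal fun i => (√(G.degree i))⁻¹

/-- The normalized Laplacian `𝓛 = D^{-1/2} L D^{-1/2}` of a graph. -/
noncomputable def normLapMatrix : Matrix V V ℝ :=
  invSqrtDegMatrix G * G.lapMatrix ℝ * invSqrtDegMatrix G

theorem conjTranspose_sqrtDegMatrix : (sqrtDegMatrix G)ᴴ = sqrtDegMatrix G :=
  isHermitian_diagonal _

theorem conjTranspose_invSqrtDegMatrix : (invSqrtDegMatrix G)ᴴ = invSqrtDegMatrix G :=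
  isHermitian_diagonal _

theorem sqrtDegMatrix_mulVec_one : sqrtDegMatrix G *ᵥ 1 = fun i => √(G.degree i : ℝ) := by
  ext i
  rw [sqrtDegMatrix, mulVec_diagonal, Pi.one_apply, mul_one]

theorem star_sqrtDegMatrix_mulVec_one_dotProduct_self :
    star (sqrtDegMatrix G *ᵥ 1) ⬝ᵥ (sqrtDegMatrix G *ᵥ 1) = 2 * (G.edgeFinset.card : ℝ) :=
  calc star (sqrtDegMatrix G *ᵥ 1) ⬝ᵥ (sqrtDegMatrix G *ᵥ 1) = ∑ i, (G.degree i : ℝ) := by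
        simp [sqrtDegMatrix_mulVec_one, dotProduct]
    _ = 2 * (G.edgeFinset.card : ℝ) := mod_cast G.sum_degrees_eq_twice_card_edges

theorem lineComplProj_sqrtDegMatrix_mulVec_one :
    lineComplProj (sqrtDegMatrix G *ᵥ 1) =
      1 - (1 / (2 * (G.edgeFinset.card : ℝ))) •
        (sqrtDegMatrix G * (of fun _ _ => 1) * sqrtDegMatrix G) := by
  have outer : vecMulVec (sqrtDegMatrix G *ᵥ 1) (star (sqrtDegMatrix G *ᵥ 1)) =
      sqrtDegMatrix G * (of fun _ _ => 1) * sqrtDegMatrix G := by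
    rw [sqrtDegMatrix_mulVec_one]
    ext i j
    simp [sqrtDegMatrix, vecMulVec_apply]
  rw [lineComplProj, star_sqrtDegMatrix_mulVec_one_dotProduct_self, outer, one_div]

variable {G}

theorem ker_mulVecLin_lapMatrix (hG : G.Connected) : (G.lapMatrix ℝ).mulVecLin.ker = ℝ ∙ 1 := by
  ext x
  rw [LinearMap.mem_ker, mulVecLin_apply, G.lapMatrix_mulVec_eq_zero_iff_forall_reachable,
    Submodule.mem_span_singleton]
  constructor
  · intro hx
    obtain ⟨i⟩ := hG.nonempty
    exact ⟨x i, funext fun j => by simpa using hx i j (hG.preconnected i j)⟩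
  · rintro ⟨c, rfl⟩ i j -
    rfl

theorem invSqrtDegMatrix_mul_sqrtDegMatrix (hdeg : ∀ i, 0 < G.degree i) :
    invSqrtDegMatrix G * sqrtDegMatrix G = 1 := by
  rw [invSqrtDegMatrix, sqrtDegMatrix, diagonal_mul_diagonal, ← diagonal_one]
  congr 1 with i
  exact inv_mul_cancel₀ (Real.sqrt_pos.2 (Nat.cast_pos.2 (hdeg i))).ne'

theorem stmt_12_general [Nontrivial V] (hG : G.Connected) {X Y : Matrix V V ℝ}
    (hX : G.lapMatrix ℝ * X * G.lapMatrix ℝ = G.lapMatrix ℝ)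
    (hY : IsMoorePenroseInverse (normLapMatrix G) Y) :
    Y = (1 - (1 / (2 * (G.edgeFinset.card : ℝ))) •
          (sqrtDegMatrix G * (of fun _ _ => 1) * sqrtDegMatrix G)) *
        (sqrtDegMatrix G * X * sqrtDegMatrix G) *
        (1 - (1 / (2 * (G.edgeFinset.card : ℝ))) •
          (sqrtDegMatrix G * (of fun _ _ => 1) * sqrtDegMatrix G)) := by
  have degree_pos := hG.preconnected.degree_pos_of_nontrivial
  have norm_ne_zero : star (sqrtDegMatrix G *ᵥ 1) ⬝ᵥ (sqrtDegMatrix G *ᵥ 1) ≠ 0 := by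
    have card_pos : 0 < G.edgeFinset.card := Finset.card_pos.2 <|
      G.edgeFinset_nonempty.2 fun h => SimpleGraph.not_connected_bot (h ▸ hG)
    rw [star_sqrtDegMatrix_mulVec_one_dotProduct_self]
    positivity
  have hY' : IsMoorePenroseInverse
      ((invSqrtDegMatrix G)ᴴ * G.lapMatrix ℝ * invSqrtDegMatrix G) Y := by
    rwa [conjTranspose_invSqrtDegMatrix]
  have key := hY'.eq_lineComplProj_mul_mul (G.isHermitian_lapMatrix ℝ) (ker_mulVecLin_lapMatrix hG)
    (invSqrtDegMatrix_mul_sqrtDegMatrix fun i => degree_pos i) norm_ne_zero hX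
  rwa [conjTranspose_sqrtDegMatrix, lineComplProj_sqrtDegMatrix_mulVec_one] at key

end Graph

/-- identity relating `𝓛†` and `L†`, basis of AppRWC.
For a connected simple graph on `n ≥ 2` vertices with `m` edges,
`𝓛† = (I - (1/(2m)) D^{1/2}𝟏𝟏ᵀD^{1/2}) D^{1/2} L† D^{1/2}
      (I - (1/(2m)) D^{1/2}𝟏𝟏ᵀD^{1/2})`. -/
theorem stmt_12
    (n : ℕ) (hn : 2 ≤ n)
    (G : SimpleGraph (Fin n)) [DecidableRel G.Adj] (hG : G.Connected)
    (m : ℕ) (hm : m = G.edgeFinset.card)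
    (A D Dh Dhi L NL Ld NLd J : Matrix (Fin n) (Fin n) ℝ)
    (hA : A = G.adjMatrix ℝ)
    (hD : D = Matrix.diagonal fun i => (G.degree i : ℝ))
    (hDh : Dh = Matrix.diagonal fun i => Real.sqrt (G.degree i))
    (hDhi : Dhi = Matrix.diagonal fun i => (Real.sqrt (G.degree i))⁻¹)
    (hL : L = D - A)
    (hNL : NL = Dhi * L * Dhi)
    (hJ : J = Matrix.of fun _ _ => (1 : ℝ))
    (hLd1 : L * Ld * L = L) (hLd2 : Ld * L * Ld = Ld)
    (hLd3 : (L * Ld)ᵀ = L * Ld) (hLd4 : (Ld * L)ᵀ = Ld * L)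
    (hNLd1 : NL * NLd * NL = NL) (hNLd2 : NLd * NL * NLd = NLd)
    (hNLd3 : (NL * NLd)ᵀ = NL * NLd) (hNLd4 : (NLd * NL)ᵀ = NLd * NL) :
    NLd = (1 - (1 / (2 * (m : ℝ))) • (Dh * J * Dh)) * (Dh * Ld * Dh) *
      (1 - (1 / (2 * (m : ℝ))) • (Dh * J * Dh)) := by
  have : Nontrivial (Fin n) := Fin.nontrivial_iff_two_le.2 hn
  subst hm hA hD hDh hDhi hL hNL hJ
  exact stmt_12_general hG hLd1 ⟨hNLd1, hNLd2, hNLd3, hNLd4⟩
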